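/- For every relational vocabulary ρ and all k, ℓ, q ∈ ℕ there exist q*, r*, s* ∈ ℕ such that the following holds. Let B be a finite ρ-structure with n := |U(B)| ≥ 2, let D be a probability distribution on U(B)^k, let C* := ⟦φ(x̄; v̄)⟧^B for some first-order formula φ(x̄; ȳ) over ρ of quantifier rank at most q with |x̄| = k, |ȳ| = ℓ and some v̄ ∈ U(B)^ℓ, and let ε, δ ∈ (0,1) and t ∈ ℕ with t ≥ s*·⌈log(n/δ)/ε⌉. Then with probability at least 1 − δ over a training sequence T = ((ū₁, C*(ū₁)),…,(ū_t, C*(ū_t))) where ū₁,…,ū_t are drawn i.i.d. from D, both of the following hold: (i) there exist a syntactically r*-local formula φ*(x̄; ȳ) over ρ of quantifier rank at most q* and v̄* ∈ U(B)^ℓ such that ⟦φ*(x̄; v̄*)⟧^B is consistent with T; and (ii) every hypothesis H = ⟦φ*(x̄; v̄*)⟧^B, with φ*(x̄; ȳ) syntactically r*-local of quantifier rank at most q* and v̄* ∈ U(B)^ℓ, that is consistent with T satisfies Pr_{ū∼D}[H(ū) ≠ C*(ū)] < ε. -/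

import Mathlib

open FirstOrder FirstOrder.Language

universe w

/-- The quantifier rank of a first-order (bounded) formula: the nesting depth of quantifiers. -/
def qRank {L : FirstOrder.Language} : ∀ {α : Type*} {n : ℕ}, L.BoundedFormula α n → ℕ
  | _, _, .falsum => 0
  | _, _, .equal _ _ => 0
  | _, _, .rel _ _ => 0
  | _, _, .imp f g => max (qRank f) (qRank g)
  | _, _, .all f => qRank f + 1

/-- Adjacency in the Gaifman graph of a structure: two distinct elements are adjacent iff
they occur together in some tuple of some relation. -/
def gaifmanAdj (L : FirstOrder.Language) (M : Type w) [L.Structure M] (a b : M) : Prop :=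
  a ≠ b ∧ ∃ (n : ℕ) (R : L.Relations n) (t : Fin n → M),
    Structure.RelMap R t ∧ (∃ i, t i = a) ∧ (∃ j, t j = b)

/-- `distLE L M r a b` means the distance between `a` and `b` in the Gaifman graph of `M`
is at most `r`. -/
def distLE (L : FirstOrder.Language) (M : Type w) [L.Structure M] : ℕ → M → M → Prop
  | 0, a, b => a = b
  | r + 1, a, b => a = b ∨ ∃ c, gaifmanAdj L M a c ∧ distLE L M r c b

theorem distLE_self (L : FirstOrder.Language) (M : Type w) [L.Structure M] (r : ℕ) (a : M) :
    distLE L M r a a := by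
  cases r with
  | zero => rfl
  | succ r => exact Or.inl rfl

/-- The `r`-neighbourhood of a tuple: all elements at Gaifman distance at most `r`
from some component of the tuple. -/
def nbhd (L : FirstOrder.Language) (M : Type w) [L.Structure M] (r : ℕ) {k : ℕ}
    (u : Fin k → M) : Set M :=
  {b | ∃ i, distLE L M r (u i) b}

/-- `IsDistFormula L r d` says that the formula `d`, with two free variables, expresses
that the Gaifman distance between its two arguments is at most `r` (this is the property
of the formula `δ_{≤r}`). -/
def IsDistFormula.{v} (L : FirstOrder.Language) (r : ℕ) (d : L.Formula (Fin 2)) : Prop :=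
  ∀ (M : Type v) [L.Structure M], ∀ a b : M, d.Realize ![a, b] ↔ distLE L M r a b

/-- The radius-`r` relativisation of a formula with free variables `x_0, …, x_{k-1}`,
relative to a formula `d = δ_{≤r}` expressing distance at most `r`: every (universal)
quantifier `∀ y ψ` is replaced by `∀ y (⋁_i δ_{≤r}(x_i, y) → ψ)` (and consequently every
existential quantifier `∃ y ψ` by `∃ y (⋁_i δ_{≤r}(x_i, y) ∧ ψ)`). -/
def relativize {L : FirstOrder.Language} (d : L.Formula (Fin 2)) :
    ∀ {k n : ℕ}, L.BoundedFormula (Fin k) n → L.BoundedFormula (Fin k) n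
  | _, _, .falsum => .falsum
  | _, _, .equal t₁ t₂ => .equal t₁ t₂
  | _, _, .rel R ts => .rel R ts
  | _, _, .imp f g => (relativize d f).imp (relativize d g)
  | k, n, .all f =>
      ((((List.finRange k).map fun i =>
          BoundedFormula.relabel (![Sum.inl i, Sum.inr (Fin.last n)] : Fin 2 → (Fin k) ⊕ (Fin (n + 1))) d).foldr
            (· ⊔ ·) ⊥).imp (relativize d f)).all

/-- A formula is syntactically `r`-local (w.r.t. the distance formula `d = δ_{≤r}`) if it is
the radius-`r` relativisation of some formula. -/
def SynLocal {L : FirstOrder.Language} (d : L.Formula (Fin 2)) {k : ℕ}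
    (φ : L.Formula (Fin k)) : Prop :=
  ∃ ψ : L.Formula (Fin k), φ = relativize d ψ

/-- The local `(q, r)`-type of a tuple `u` in `M`: the set of syntactically `r`-local formulas
(w.r.t. the distance formula `d = δ_{≤r}`) of quantifier rank at most `q` satisfied by `u`. -/
def ltp {L : FirstOrder.Language} (d : L.Formula (Fin 2)) (q : ℕ) (M : Type w) [L.Structure M]
    {k : ℕ} (u : Fin k → M) : Set (L.Formula (Fin k)) :=
  {φ | SynLocal d φ ∧ qRank φ ≤ q ∧ φ.Realize u}

/-- The first-order `q`-type of a tuple `u` in `M`: the set of formulas of quantifier rank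
at most `q` (with free variables among `x_0, …, x_{k-1}`) satisfied by `u`. -/
def ftp {L : FirstOrder.Language} (q : ℕ) (M : Type w) [L.Structure M]
    {k : ℕ} (u : Fin k → M) : Set (L.Formula (Fin k)) :=
  {φ | qRank φ ≤ q ∧ φ.Realize u}

/-- The union of two disjoint structures (realized as a structure on the sum type):
a relation holds of a tuple iff the tuple lies entirely in one part and the relation
holds there. -/
def sumStructure (L : FirstOrder.Language) [L.IsRelational] (M N : Type w)
    [L.Structure M] [L.Structure N] : L.Structure (M ⊕ N) where
  funMap f _ := isEmptyElim f
  RelMap R t :=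
    (∃ s, t = Sum.inl ∘ s ∧ Structure.RelMap R s) ∨
    (∃ s, t = Sum.inr ∘ s ∧ Structure.RelMap R s)

/-- The substructure of `M` induced on a subset `S`. -/
def inducedStructure (L : FirstOrder.Language) [L.IsRelational] {M : Type w} [L.Structure M]
    (S : Set M) : L.Structure S where
  funMap f _ := isEmptyElim f
  RelMap R t := Structure.RelMap R fun i => (t i : M)

/-- A formula `φ(x_1, …, x_k)` is `r`-local if for every structure `M` and every tuple `u`,
`M ⊨ φ(u)` iff the substructure induced on the `r`-neighbourhood of `u` satisfies `φ(u)`. -/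
def RLocal.{v} (L : FirstOrder.Language) [L.IsRelational] (r : ℕ) {k : ℕ}
    (φ : L.Formula (Fin k)) : Prop :=
  ∀ (M : Type v) [L.Structure M] (u : Fin k → M),
    φ.Realize u ↔
      (letI := inducedStructure L (nbhd L M r u)
       Formula.Realize (M := nbhd L M r u) φ
         (fun i => ⟨u i, i, distLE_self L M r (u i)⟩))

/-!
If Duplicator wins a long enough Ehrenfeucht–Fraïssé game confined to large neighbourhoods of two
tuples of one structure, then Duplicator wins the game on the whole structure. A move near the
tuples is answered by the confined game. A move `a` far away needs a distant partner of the same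
local type: if there were none, every scattered family of elements of this type would lie near one
tuple, could be transferred near the other one and enlarged by `a`, until it has more members than
there are balls around the tuple. Hence, on a fixed structure, every formula of quantifier rank `q`
is a Boolean combination of local formulas of bounded rank and radius, and the target concept is
itself an admissible hypothesis.

Up to equivalence there are only finitely many, say `F`, formulas of bounded quantifier rank, so
there are at most `F * n ^ ℓ` hypotheses. One of error at least `ε` is consistent with `t` samples
with probability at most `(1 - ε) ^ t`, and a union bound gives the generalisation guarantee.
-/

section GaifmanDistance

variable {L : FirstOrder.Language} {M : Type*} [L.Structure M] {a b c : M} {r s t : ℕ}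
  {S T : Set M}

theorem gaifmanAdj.symm (h : gaifmanAdj L M a b) : gaifmanAdj L M b a := by
  obtain ⟨hne, n, R, t, hR, ha, hb⟩ := h
  exact ⟨hne.symm, n, R, t, hR, hb, ha⟩

theorem gaifmanAdj.distLE_one (h : gaifmanAdj L M a b) : distLE L M 1 a b :=
  Or.inr ⟨b, h, rfl⟩

theorem distLE.mono (h : distLE L M r a b) (hrs : r ≤ s) : distLE L M s a b := by
  induction r generalizing a s with
  | zero => exact (show a = b from h) ▸ distLE_self L M s a
  | succ r ih =>
    obtain ⟨s, rfl⟩ := Nat.exists_eq_add_of_le' (Nat.one_le_of_lt hrs)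
    rcases h with rfl | ⟨c, hac, hcb⟩
    · exact Or.inl rfl
    · exact Or.inr ⟨c, hac, ih hcb (Nat.le_of_succ_le_succ hrs)⟩

theorem distLE.trans (h : distLE L M r a b) (h' : distLE L M s b c) :
    distLE L M (r + s) a c := by
  induction r generalizing a with
  | zero =>
    obtain rfl : a = b := h
    exact h'.mono (Nat.le_add_left s 0)
  | succ r ih =>
    rcases h with rfl | ⟨d, had, hdb⟩
    · exact h'.mono (Nat.le_add_left s _)
    · rw [Nat.succ_add]
      exact Or.inr ⟨d, had, ih hdb⟩

theorem distLE.symm (h : distLE L M r a b) : distLE L M r b a := by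
  induction r generalizing a with
  | zero => exact Eq.symm h
  | succ r ih =>
    rcases h with rfl | ⟨c, hac, hcb⟩
    · exact Or.inl rfl
    · exact (ih hcb).trans hac.symm.distLE_one

theorem distLE_one_of_relMap {n : ℕ} {R : L.Relations n} {x : Fin n → M}
    (h : Structure.RelMap R x) (i j : Fin n) : distLE L M 1 (x i) (x j) := by
  by_cases hij : x i = x j
  · exact Or.inl hij
  · exact gaifmanAdj.distLE_one ⟨hij, n, R, x, h, ⟨i, rfl⟩, ⟨j, rfl⟩⟩

/-- The `r`-neighbourhood of a set `S`: all elements at Gaifman distance at most `r` from some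
element of `S`. The notion `nbhd` is the case where `S` is the range of a tuple. -/
def gaifmanNbhd (L : FirstOrder.Language) {M : Type*} [L.Structure M] (r : ℕ) (S : Set M) :
    Set M :=
  {b | ∃ a ∈ S, distLE L M r a b}

theorem subset_gaifmanNbhd : S ⊆ gaifmanNbhd L r S :=
  fun a ha => ⟨a, ha, distLE_self L M r a⟩

theorem mem_gaifmanNbhd_of_distLE (ha : a ∈ gaifmanNbhd L r S) (h : distLE L M s a b)
    (hrs : r + s ≤ t) : b ∈ gaifmanNbhd L t S := by
  obtain ⟨c, hc, hca⟩ := ha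
  exact ⟨c, hc, (hca.trans h).mono hrs⟩

theorem gaifmanNbhd_subset_gaifmanNbhd (hT : T ⊆ gaifmanNbhd L r S) (h : r + s ≤ t) :
    gaifmanNbhd L s T ⊆ gaifmanNbhd L t S := by
  rintro b ⟨a, ha, hab⟩
  exact mem_gaifmanNbhd_of_distLE (hT ha) hab h

theorem gaifmanNbhd_mono_radius (h : r ≤ t) : gaifmanNbhd L r S ⊆ gaifmanNbhd L t S :=
  fun _ ⟨a, ha, hab⟩ => ⟨a, ha, hab.mono h⟩

theorem gaifmanNbhd_insert :
    gaifmanNbhd L r (insert a S) = gaifmanNbhd L r {a} ∪ gaifmanNbhd L r S := by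
  ext b
  simp only [gaifmanNbhd, Set.mem_union, Set.mem_ofPred_eq, Set.exists_mem_insert,
    Set.mem_singleton_iff, exists_eq_left]

theorem gaifmanNbhd_range {k : ℕ} (u : Fin k → M) :
    gaifmanNbhd L r (Set.range u) = nbhd L M r u := by
  ext b
  simp only [gaifmanNbhd, nbhd, Set.exists_range_iff]

theorem encard_le_of_pairwise_not_distLE {ι : Type*} {x : ι → M} {d : ℕ}
    (hx : ∀ i, x i ∈ gaifmanNbhd L d S)
    (hfar : Pairwise fun i j => ¬ distLE L M (2 * d) (x i) (x j)) :
    ENat.card ι ≤ S.encard := by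
  choose p hp hpx using hx
  have hinj : Function.Injective fun i => (⟨p i, hp i⟩ : S) := by
    intro i j hij
    have hpij : p i = p j := congrArg Subtype.val hij
    by_contra hne
    refine hfar hne (two_mul d ▸ (hpx i).symm.trans ?_)
    exact hpij ▸ hpx j
  exact ENat.card_le_card_of_injective hinj

end GaifmanDistance

section Game

variable {L : FirstOrder.Language} {M N P : Type*} [L.Structure M] [L.Structure N] [L.Structure P]
  {X X₁ X₂ : Set M} {Y Y₁ Y₂ : Set N} {Z : Set P} {s t s₁ s₂ : SetRel M N} {q q' : ℕ}

/-- Partial isomorphisms, the positions of the Ehrenfeucht–Fraïssé game in which Duplicator has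
not lost. They are encoded by their graphs, so that a position can be enlarged by `insert`. -/
structure IsPartialIso (L : FirstOrder.Language) {M N : Type*} [L.Structure M] [L.Structure N]
    (s : SetRel M N) : Prop where
  eq_iff : ∀ {a a' b b'}, (a, b) ∈ s → (a', b') ∈ s → (a = a' ↔ b = b')
  relMap_iff : ∀ {n : ℕ} (R : L.Relations n) {x : Fin n → M} {y : Fin n → N},
    (∀ i, (x i, y i) ∈ s) → (Structure.RelMap R x ↔ Structure.RelMap R y)

namespace IsPartialIso

theorem subset (h : IsPartialIso L s) (hts : t ⊆ s) : IsPartialIso L t :=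
  ⟨fun ha hb => h.eq_iff (hts ha) (hts hb), fun R _ _ hxy => h.relMap_iff R fun i => hts (hxy i)⟩

theorem symm (h : IsPartialIso L s) : IsPartialIso L s.inv :=
  ⟨fun ha hb => (h.eq_iff ha hb).symm, fun R _ _ hxy => (h.relMap_iff R hxy).symm⟩

theorem of_subset_id {s : SetRel M M} (h : s ⊆ SetRel.id) : IsPartialIso L s where
  eq_iff ha hb := by rw [SetRel.mem_id.1 (h ha), SetRel.mem_id.1 (h hb)]
  relMap_iff R x y hxy := by rw [funext fun i => SetRel.mem_id.1 (h (hxy i))]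

theorem comp {t : SetRel N P} (hs : IsPartialIso L s) (ht : IsPartialIso L t) :
    IsPartialIso L (s.comp t) where
  eq_iff := by
    rintro _ _ _ _ ⟨b, hab, hbc⟩ ⟨b', hab', hbc'⟩
    exact (hs.eq_iff hab hab').trans (ht.eq_iff hbc hbc')
  relMap_iff R x z hxz := by
    choose y hxy hyz using hxz
    exact (hs.relMap_iff R hxy).trans (ht.relMap_iff R hyz)

end IsPartialIso

theorem forall_notMem_or_forall_notMem_of_relMap (hX : ∀ x ∈ X₁, ∀ y ∈ X₂, ¬ distLE L M 1 x y)
    {n : ℕ} {R : L.Relations n} {x : Fin n → M} (hR : Structure.RelMap R x) :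
    (∀ i, x i ∉ X₂) ∨ ∀ i, x i ∉ X₁ := by
  by_contra! hcon
  obtain ⟨⟨j, hj⟩, i, hi⟩ := hcon
  exact hX _ hi _ hj (distLE_one_of_relMap hR i j)

theorem IsPartialIso.union (hs : IsPartialIso L s₁) (ht : IsPartialIso L s₂)
    (hX : ∀ x ∈ X₁, ∀ x' ∈ X₂, ¬ distLE L M 1 x x')
    (hY : ∀ y ∈ Y₁, ∀ y' ∈ Y₂, ¬ distLE L N 1 y y')
    (h₁ : s₁ ⊆ X₁ ×ˢ Y₁) (h₂ : s₂ ⊆ X₂ ×ˢ Y₂) : IsPartialIso L (s₁ ∪ s₂) where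
  eq_iff := by
    rintro a a' b b' (h | h) (h' | h')
    · exact hs.eq_iff h h'
    · exact iff_of_false (fun e => hX _ (h₁ h).1 _ (h₂ h').1 (Or.inl e))
        (fun e => hY _ (h₁ h).2 _ (h₂ h').2 (Or.inl e))
    · exact iff_of_false (fun e => hX _ (h₁ h').1 _ (h₂ h).1 (Or.inl e.symm))
        (fun e => hY _ (h₁ h').2 _ (h₂ h).2 (Or.inl e.symm))
    · exact ht.eq_iff h h'
  relMap_iff R x y hxy := by
    constructor <;> intro hR
    · rcases forall_notMem_or_forall_notMem_of_relMap hX hR with h | h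
      · exact (hs.relMap_iff R fun i => (hxy i).resolve_right fun hi => h i (h₂ hi).1).1 hR
      · exact (ht.relMap_iff R fun i => (hxy i).resolve_left fun hi => h i (h₁ hi).1).1 hR
    · rcases forall_notMem_or_forall_notMem_of_relMap hY hR with h | h
      · exact (hs.relMap_iff R fun i => (hxy i).resolve_right fun hi => h i (h₂ hi).2).2 hR
      · exact (ht.relMap_iff R fun i => (hxy i).resolve_left fun hi => h i (h₁ hi).2).2 hR

/-- Duplicator wins the `q`-round Ehrenfeucht–Fraïssé game from position `s`, where moves in `M`
are restricted to `X` and moves in `N` to `Y`; the position itself need not lie in `X ×ˢ Y`. -/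
def EFWin (L : FirstOrder.Language) {M N : Type*} [L.Structure M] [L.Structure N] :
    ℕ → Set M → Set N → SetRel M N → Prop
  | 0, _, _, s => IsPartialIso L s
  | q + 1, X, Y, s => IsPartialIso L s ∧
      (∀ a ∈ X, ∃ b ∈ Y, EFWin L q X Y (insert (a, b) s)) ∧
      ∀ b ∈ Y, ∃ a ∈ X, EFWin L q X Y (insert (a, b) s)

namespace EFWin

theorem isPartialIso (h : EFWin L q X Y s) : IsPartialIso L s := by
  cases q with
  | zero => exact h
  | succ q => exact h.1

theorem subset (h : EFWin L q X Y s) (hts : t ⊆ s) : EFWin L q X Y t := by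
  induction q generalizing s t with
  | zero => exact IsPartialIso.subset h hts
  | succ q ih =>
    refine ⟨h.1.subset hts, fun a ha => ?_, fun b hb => ?_⟩
    · obtain ⟨b, hb, hab⟩ := h.2.1 a ha
      exact ⟨b, hb, ih hab (Set.insert_subset_insert hts)⟩
    · obtain ⟨a, ha, hab⟩ := h.2.2 b hb
      exact ⟨a, ha, ih hab (Set.insert_subset_insert hts)⟩

theorem mono (h : EFWin L q X Y s) (hq : q' ≤ q) : EFWin L q' X Y s := by
  induction q' generalizing q s with
  | zero => exact h.isPartialIso
  | succ q' ih =>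
    obtain ⟨q, rfl⟩ := Nat.exists_eq_add_of_le' (Nat.one_le_of_lt hq)
    have hq' : q' ≤ q := Nat.le_of_succ_le_succ hq
    refine ⟨h.1, fun a ha => ?_, fun b hb => ?_⟩
    · obtain ⟨b, hb, hab⟩ := h.2.1 a ha
      exact ⟨b, hb, ih hab hq'⟩
    · obtain ⟨a, ha, hab⟩ := h.2.2 b hb
      exact ⟨a, ha, ih hab hq'⟩

theorem symm (h : EFWin L q X Y s) : EFWin L q Y X s.inv := by
  induction q generalizing s with
  | zero => exact IsPartialIso.symm h
  | succ q ih =>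
    have inv_insert : ∀ a b, SetRel.inv (insert (a, b) s) = insert (b, a) s.inv := by
      intro a b
      ext ⟨b', a'⟩
      simp only [SetRel.mem_inv, Set.mem_insert_iff, Prod.mk.injEq, and_comm]
    refine ⟨h.1.symm, fun b hb => ?_, fun a ha => ?_⟩
    · obtain ⟨a, ha, hab⟩ := h.2.2 b hb
      exact ⟨a, ha, inv_insert a b ▸ ih hab⟩
    · obtain ⟨b, hb, hab⟩ := h.2.1 a ha
      exact ⟨b, hb, inv_insert a b ▸ ih hab⟩

theorem of_subset_id {s : SetRel M M} (h : s ⊆ SetRel.id) : EFWin L q X X s := by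
  induction q generalizing s with
  | zero => exact IsPartialIso.of_subset_id h
  | succ q ih =>
    have copy : ∀ a ∈ X, EFWin L q X X (insert (a, a) s) := fun a _ =>
      ih (Set.insert_subset (SetRel.mem_id.2 rfl) h)
    exact ⟨IsPartialIso.of_subset_id h, fun a ha => ⟨a, ha, copy a ha⟩,
      fun a ha => ⟨a, ha, copy a ha⟩⟩

theorem comp {t : SetRel N P} (hs : EFWin L q X Y s) (ht : EFWin L q Y Z t) :
    EFWin L q X Z (s.comp t) := by
  induction q generalizing s t with
  | zero => exact IsPartialIso.comp hs ht
  | succ q ih =>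
    have insert_comp : ∀ a b c,
        insert (a, c) (s.comp t) ⊆ SetRel.comp (insert (a, b) s) (insert (b, c) t) := by
      rintro a b c p (rfl | ⟨b', hab, hbc⟩)
      · exact ⟨b, Or.inl rfl, Or.inl rfl⟩
      · exact ⟨b', Or.inr hab, Or.inr hbc⟩
    refine ⟨hs.1.comp ht.1, fun a ha => ?_, fun c hc => ?_⟩
    · obtain ⟨b, hb, hab⟩ := hs.2.1 a ha
      obtain ⟨c, hc, hbc⟩ := ht.2.1 b hb
      exact ⟨c, hc, (ih hab hbc).subset (insert_comp a b c)⟩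
    · obtain ⟨b, hb, hbc⟩ := ht.2.2 c hc
      obtain ⟨a, ha, hab⟩ := hs.2.2 b hb
      exact ⟨a, ha, (ih hab hbc).subset (insert_comp a b c)⟩

theorem exists_tuple {n : ℕ} (h : EFWin L (n + q) X Y s) (x : Fin n → M) (hx : ∀ i, x i ∈ X) :
    ∃ y : Fin n → N, EFWin L q X Y (s ∪ Set.range fun i => (x i, y i)) := by
  induction n generalizing s with
  | zero => exact ⟨Fin.elim0, by simpa using h⟩
  | succ n ih =>
    rw [Nat.succ_add] at h
    obtain ⟨b, -, hab⟩ := h.2.1 (x 0) (hx 0)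
    obtain ⟨y, hy⟩ := ih hab (fun i => x i.succ) fun i => hx _
    refine ⟨Fin.cons b y, hy.subset (Set.union_subset (fun p hp => Or.inl (Or.inr hp)) ?_)⟩
    rintro _ ⟨i, rfl⟩
    cases i using Fin.cases with
    | zero => exact Or.inl (Or.inl rfl)
    | succ i => exact Or.inr ⟨i, rfl⟩

/-- Duplicator answers each move in the part where it is made. -/
theorem union (hs : EFWin L q X₁ Y₁ s₁) (ht : EFWin L q X₂ Y₂ s₂)
    (hX : ∀ x ∈ X₁, ∀ x' ∈ X₂, ¬ distLE L M 1 x x')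
    (hY : ∀ y ∈ Y₁, ∀ y' ∈ Y₂, ¬ distLE L N 1 y y')
    (h₁ : s₁ ⊆ X₁ ×ˢ Y₁) (h₂ : s₂ ⊆ X₂ ×ˢ Y₂) :
    EFWin L q (X₁ ∪ X₂) (Y₁ ∪ Y₂) (s₁ ∪ s₂) := by
  have hiso := hs.isPartialIso.union ht.isPartialIso hX hY h₁ h₂
  induction q generalizing s₁ s₂ with
  | zero => exact hiso
  | succ q ih =>
    have left : ∀ a ∈ X₁, ∀ b ∈ Y₁, EFWin L q X₁ Y₁ (insert (a, b) s₁) →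
        EFWin L q (X₁ ∪ X₂) (Y₁ ∪ Y₂) (insert (a, b) (s₁ ∪ s₂)) := by
      intro a ha b hb h
      have h₁' := Set.insert_subset (Set.mk_mem_prod ha hb) h₁
      exact Set.insert_union ▸ ih h (ht.mono q.le_succ) h₁' h₂
        (h.isPartialIso.union ht.isPartialIso hX hY h₁' h₂)
    have right : ∀ a ∈ X₂, ∀ b ∈ Y₂, EFWin L q X₂ Y₂ (insert (a, b) s₂) →
        EFWin L q (X₁ ∪ X₂) (Y₁ ∪ Y₂) (insert (a, b) (s₁ ∪ s₂)) := by
      intro a ha b hb h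
      have h₂' := Set.insert_subset (Set.mk_mem_prod ha hb) h₂
      exact Set.union_insert ▸ ih (hs.mono q.le_succ) h h₁ h₂'
        (hs.isPartialIso.union h.isPartialIso hX hY h₁ h₂')
    refine ⟨hiso, ?_, ?_⟩
    · rintro a (ha | ha)
      · obtain ⟨b, hb, h⟩ := hs.2.1 a ha
        exact ⟨b, Or.inl hb, left a ha b hb h⟩
      · obtain ⟨b, hb, h⟩ := ht.2.1 a ha
        exact ⟨b, Or.inr hb, right a ha b hb h⟩
    · rintro b (hb | hb)
      · obtain ⟨a, ha, h⟩ := hs.2.2 b hb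
        exact ⟨a, Or.inl ha, left a ha b hb h⟩
      · obtain ⟨a, ha, h⟩ := ht.2.2 b hb
        exact ⟨a, Or.inr ha, right a ha b hb h⟩

end EFWin

end Game

section Locality

variable {L : FirstOrder.Language} {M N P : Type*} [L.Structure M] [L.Structure N] [L.Structure P]
  {A : ℕ} {X : Set M} {Y : Set N} {s t : SetRel M N} {a a' : M} {b b' : N} {q r d m : ℕ}

/-- Each step of a path of length at most `r` lies in a tuple of at most `A` elements, which
Spoiler can play in full. -/
theorem EFWin.map_distLE (hA : ∀ n, L.Relations n → n ≤ A) (h : EFWin L (A * r) X Y s)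
    (hab : (a, b) ∈ s) (hab' : (a', b') ∈ s) (hX : ∀ z, distLE L M r a z → z ∈ X)
    (haa' : distLE L M r a a') : distLE L N r b b' := by
  induction r generalizing a b s with
  | zero => exact (h.isPartialIso.eq_iff hab hab').1 haa'
  | succ r ih =>
    rcases haa' with rfl | ⟨c, hac, hca'⟩
    · exact Or.inl ((h.isPartialIso.eq_iff hab hab').1 rfl)
    obtain ⟨hne, n, R, x, hR, ⟨i, rfl⟩, j, rfl⟩ := id hac
    have hrank : n + A * r ≤ A * (r + 1) := by
      rw [Nat.mul_succ, add_comm]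
      exact Nat.add_le_add_left (hA n R) _
    obtain ⟨y, hy⟩ := (h.mono hrank).exists_tuple x
      fun l => hX _ ((distLE_one_of_relMap hR i l).mono (Nat.le_add_left 1 r))
    have hiso := hy.isPartialIso
    have hxy : ∀ l, (x l, y l) ∈ s ∪ Set.range fun i => (x i, y i) := fun l => Or.inr ⟨l, rfl⟩
    obtain rfl : b = y i := (hiso.eq_iff (Or.inl hab) (hxy i)).1 rfl
    have hadj : gaifmanAdj L N (y i) (y j) :=
      ⟨fun hyy => hne ((hiso.eq_iff (hxy i) (hxy j)).2 hyy), n, R, y,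
        (hiso.relMap_iff R hxy).1 hR, ⟨i, rfl⟩, j, rfl⟩
    exact Or.inr ⟨y j, hadj, ih hy (hxy j) (Or.inl hab') (fun z hz => hX z (Or.inr ⟨_, hac, hz⟩))
      hca'⟩

theorem EFWin.mem_gaifmanNbhd_cod (hA : ∀ n, L.Relations n → n ≤ A) (h : EFWin L (A * r) X Y s)
    (hts : t ⊆ s) (hX : gaifmanNbhd L r t.dom ⊆ X) (hab : (a, b) ∈ s)
    (ha : a ∈ gaifmanNbhd L r t.dom) : b ∈ gaifmanNbhd L r t.cod := by
  obtain ⟨c, ⟨c', hc⟩, hca⟩ := ha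
  exact ⟨c', ⟨c, hc⟩, h.map_distLE hA (hts hc) hab (fun z hz => hX ⟨c, ⟨c', hc⟩, hz⟩) hca⟩

theorem EFWin.mem_gaifmanNbhd_dom (hA : ∀ n, L.Relations n → n ≤ A) (h : EFWin L (A * r) X Y s)
    (hts : t ⊆ s) (hY : gaifmanNbhd L r t.cod ⊆ Y) (hab : (a, b) ∈ s)
    (hb : b ∈ gaifmanNbhd L r t.cod) : a ∈ gaifmanNbhd L r t.dom :=
  h.symm.mem_gaifmanNbhd_cod (t := t.inv) hA (fun _ hp => hts hp) hY hab hb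

/-- Spoiler gains nothing from leaving the `r`-neighbourhood of `t` when Duplicator can afford
`A * r` further rounds, since the answers then stay in the `r`-neighbourhood as well. -/
theorem EFWin.restrict_gaifmanNbhd (hA : ∀ n, L.Relations n → n ≤ A)
    (h : EFWin L (q + A * r) X Y s) (hts : t ⊆ s) (hX : gaifmanNbhd L r t.dom ⊆ X)
    (hY : gaifmanNbhd L r t.cod ⊆ Y) :
    EFWin L q (gaifmanNbhd L r t.dom) (gaifmanNbhd L r t.cod) s := by
  induction q generalizing s with
  | zero => exact h.isPartialIso
  | succ q ih =>
    rw [Nat.succ_add] at h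
    have hts' : ∀ p, t ⊆ insert p s := fun p => hts.trans (Set.subset_insert p s)
    refine ⟨h.1, fun a ha => ?_, fun b hb => ?_⟩
    · obtain ⟨b, -, hab⟩ := h.2.1 a (hX ha)
      exact ⟨b, (hab.mono (Nat.le_add_left _ q)).mem_gaifmanNbhd_cod hA (hts' _) hX (Or.inl rfl) ha,
        ih hab (hts' _)⟩
    · obtain ⟨a, -, hab⟩ := h.2.2 b (hY hb)
      exact ⟨a, (hab.mono (Nat.le_add_left _ q)).mem_gaifmanNbhd_dom hA (hts' _) hY (Or.inl rfl) hb,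
        ih hab (hts' _)⟩

/-- Duplicator wins the `q`-round game from `s` when the moves are confined to the
`r`-neighbourhoods of the position: the two sides have the same local type. -/
def LocalEFWin (L : FirstOrder.Language) {M N : Type*} [L.Structure M] [L.Structure N] (q r : ℕ)
    (s : SetRel M N) : Prop :=
  EFWin L q (gaifmanNbhd L r s.dom) (gaifmanNbhd L r s.cod) s

theorem EFWin.localEFWin (hA : ∀ n, L.Relations n → n ≤ A) (h : EFWin L (q + A * r) X Y s)
    (hts : t ⊆ s) (hX : gaifmanNbhd L r t.dom ⊆ X) (hY : gaifmanNbhd L r t.cod ⊆ Y) :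
    LocalEFWin L q r t :=
  (h.restrict_gaifmanNbhd hA hts hX hY).subset hts

theorem setRel_dom_insert : SetRel.dom (insert (a, b) s) = insert a s.dom := by
  ext x
  simp only [SetRel.mem_dom, Set.mem_insert_iff, Prod.mk.injEq, exists_or, exists_and_left,
    exists_eq, and_true]

theorem setRel_cod_insert : SetRel.cod (insert (a, b) s) = insert b s.cod := by
  ext y
  simp only [SetRel.mem_cod, Set.mem_insert_iff, Prod.mk.injEq, exists_or, exists_eq_left]

theorem setRel_dom_singleton : SetRel.dom {(a, b)} = {a} := by
  ext x
  simp only [SetRel.mem_dom, Set.mem_singleton_iff, Prod.mk.injEq, exists_and_left, exists_eq,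
    and_true]

theorem setRel_cod_singleton : SetRel.cod {(a, b)} = {b} := by
  ext y
  simp only [SetRel.mem_cod, Set.mem_singleton_iff, Prod.mk.injEq, exists_eq_left]

theorem encard_setRel_cod_le : s.cod.encard ≤ s.encard := by
  have hcod : s.cod = Prod.snd '' s := by
    ext y
    simp only [SetRel.mem_cod, Set.mem_image, Prod.exists, exists_eq_right]
  exact hcod ▸ Set.encard_image_le _ _

namespace LocalEFWin

theorem symm (h : LocalEFWin L q r s) : LocalEFWin L q r s.inv :=
  EFWin.symm h

theorem singleton_iff : LocalEFWin L q r {(a, b)} ↔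
    EFWin L q (gaifmanNbhd L r {a}) (gaifmanNbhd L r {b}) {(a, b)} := by
  rw [LocalEFWin, setRel_dom_singleton, setRel_cod_singleton]

theorem singleton_refl (a : M) : LocalEFWin L q r {(a, a)} :=
  singleton_iff.2 (EFWin.of_subset_id (by rintro _ rfl; rfl))

theorem singleton_trans {c : P} (hab : LocalEFWin L q r {(a, b)})
    (hbc : LocalEFWin L q r {(b, c)}) : LocalEFWin L q r {(a, c)} := by
  rw [singleton_iff] at *
  refine (hab.comp hbc).subset ?_
  rintro _ rfl
  exact ⟨b, rfl, rfl⟩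

theorem insert_of_far (hs : LocalEFWin L q r s) (hab : LocalEFWin L q r {(a, b)})
    (ha : a ∉ gaifmanNbhd L (2 * r + 1) s.dom) (hb : b ∉ gaifmanNbhd L (2 * r + 1) s.cod) :
    LocalEFWin L q r (insert (a, b) s) := by
  rw [LocalEFWin, setRel_dom_insert, setRel_cod_insert, gaifmanNbhd_insert, gaifmanNbhd_insert,
    Set.insert_eq]
  refine (singleton_iff.1 hab).union hs (fun x hx x' hx' hxx' => ha ?_)
    (fun y hy y' hy' hyy' => hb ?_) ?_ fun p hp => ⟨?_, ?_⟩
  · obtain ⟨_, rfl, hax⟩ := hx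
    exact mem_gaifmanNbhd_of_distLE hx' (hxx'.symm.trans hax.symm) (by lia)
  · obtain ⟨_, rfl, hby⟩ := hy
    exact mem_gaifmanNbhd_of_distLE hy' (hyy'.symm.trans hby.symm) (by lia)
  · exact Set.singleton_subset_iff.2 ⟨subset_gaifmanNbhd rfl, subset_gaifmanNbhd rfl⟩
  · exact subset_gaifmanNbhd ⟨p.2, hp⟩
  · exact subset_gaifmanNbhd ⟨p.1, hp⟩

theorem exists_insert_of_near (hA : ∀ n, L.Relations n → n ≤ A) {r' : ℕ}
    (h : LocalEFWin L (q + A * d + 1) r' s) (hrd : r ≤ d) (hr' : d + r ≤ r')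
    (ha : a ∈ gaifmanNbhd L d s.dom) : ∃ b, LocalEFWin L q r (insert (a, b) s) := by
  obtain ⟨b, -, hab⟩ := h.2.1 a (gaifmanNbhd_mono_radius (by lia) ha)
  have hb : b ∈ gaifmanNbhd L d s.cod :=
    (hab.mono (Nat.le_add_left _ q)).mem_gaifmanNbhd_cod hA (Set.subset_insert _ s)
      (gaifmanNbhd_mono_radius (by lia)) (Or.inl rfl) ha
  have hrank : q + A * r ≤ q + A * d := by gcongr
  refine ⟨b, (hab.mono hrank).localEFWin hA subset_rfl ?_ ?_⟩
  · rw [setRel_dom_insert]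
    exact gaifmanNbhd_subset_gaifmanNbhd (Set.insert_subset ha subset_gaifmanNbhd) hr'
  · rw [setRel_cod_insert]
    exact gaifmanNbhd_subset_gaifmanNbhd (Set.insert_subset hb subset_gaifmanNbhd) hr'

end LocalEFWin

/-- A `d`-scattered family of elements with the local type of `a`: the families that witness how
often a local type is realised, as counted in Gaifman's basic local sentences. -/
structure IsScattered (L : FirstOrder.Language) {M N : Type*} [L.Structure M] [L.Structure N]
    (q r d : ℕ) (a : M) {ι : Type*} (c : ι → N) : Prop where
  localEFWin : ∀ i, LocalEFWin L q r {(a, c i)}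
  pairwise : Pairwise fun i j => ¬ distLE L N d (c i) (c j)

namespace IsScattered

theorem cons {e : ℕ} {c : Fin e → N} (hc : IsScattered L q r d a c)
    (hab : LocalEFWin L q r {(a, b)}) (hb : ∀ i, ¬ distLE L N d b (c i)) :
    IsScattered L q r d a (Fin.cons b c : Fin (e + 1) → N) where
  localEFWin i := by
    cases i using Fin.cases with
    | zero => exact hab
    | succ i => exact hc.localEFWin i
  pairwise i j hij := by
    cases i using Fin.cases with
    | zero =>
      cases j using Fin.cases with
      | zero => exact absurd rfl hij
      | succ j => exact hb j
    | succ i =>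
      cases j using Fin.cases with
      | zero => exact fun h => hb i h.symm
      | succ j => exact hc.pairwise fun h => hij (congrArg Fin.succ h)

theorem exists_transfer (hA : ∀ n, L.Relations n → n ≤ A) {e r' : ℕ} {p : P} {c : Fin e → M}
    (h : LocalEFWin L (e + (q + A * (3 * d))) r' s) (hrd : r ≤ d) (hr' : 3 * d ≤ r')
    (hc : IsScattered L q r (2 * d) p c) (hcs : ∀ i, c i ∈ gaifmanNbhd L d s.dom) :
    ∃ c' : Fin e → N, IsScattered L q r (2 * d) p c' ∧ ∀ i, c' i ∈ gaifmanNbhd L d s.cod := by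
  obtain ⟨c', hw⟩ := h.exists_tuple c fun i => gaifmanNbhd_mono_radius (by lia) (hcs i)
  have hrank : ∀ {ρ}, ρ ≤ 3 * d → A * ρ ≤ q + A * (3 * d) := fun hρ =>
    (Nat.mul_le_mul_left A hρ).trans (Nat.le_add_left _ _)
  have hcc' : ∀ i, (c i, c' i) ∈ s ∪ Set.range fun i => (c i, c' i) := fun i => Or.inr ⟨i, rfl⟩
  have hc's : ∀ i, c' i ∈ gaifmanNbhd L d s.cod := fun i =>
    (hw.mono (hrank (by lia))).mem_gaifmanNbhd_cod hA Set.subset_union_left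
      (gaifmanNbhd_mono_radius (by lia)) (hcc' i) (hcs i)
  refine ⟨c', ⟨fun i => (hc.localEFWin i).singleton_trans ?_, fun i j hij hd => ?_⟩, hc's⟩
  · have hqr : q + A * r ≤ q + A * (3 * d) := by gcongr; lia
    refine (hw.mono hqr).localEFWin hA (Set.singleton_subset_iff.2 (hcc' i)) ?_ ?_
    · rw [setRel_dom_singleton]
      exact gaifmanNbhd_subset_gaifmanNbhd (Set.singleton_subset_iff.2 (hcs i)) (by lia)
    · rw [setRel_cod_singleton]
      exact gaifmanNbhd_subset_gaifmanNbhd (Set.singleton_subset_iff.2 (hc's i)) (by lia)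
  · exact hc.pairwise hij ((hw.mono (hrank (by lia))).symm.map_distLE hA (hcc' i) (hcc' j)
      (fun z hz => mem_gaifmanNbhd_of_distLE (hc's i) hz (by lia)) hd)

end IsScattered

namespace LocalEFWin

variable {s : SetRel M M} {r' : ℕ} {a : M}

/-- If all realisations of the local type of `a` were near the range of the position, a scattered
family of realisations could be moved to its domain and enlarged by `a` over and over again. -/
theorem exists_far (hA : ∀ n, L.Relations n → n ≤ A)
    (h : LocalEFWin L (m + (q + A * (3 * d))) r' s) (hs : s.cod.encard ≤ m) (hrd : r ≤ d)
    (hr' : 3 * d ≤ r') (ha : a ∉ gaifmanNbhd L (3 * d) s.dom) :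
    ∃ b ∉ gaifmanNbhd L d s.cod, LocalEFWin L q r {(a, b)} := by
  by_contra! hnear
  replace hnear : ∀ b, LocalEFWin L q r {(a, b)} → b ∈ gaifmanNbhd L d s.cod := fun b hab =>
    by_contra fun hb => hnear b hb hab
  have grow : ∀ e ≤ m + 1, ∃ c : Fin e → M, IsScattered L q r (2 * d) a c := by
    intro e
    induction e with
    | zero => exact fun _ => ⟨Fin.elim0, fun i => i.elim0, fun i => i.elim0⟩
    | succ e ih =>
      intro he
      obtain ⟨c, hc⟩ := ih (Nat.le_of_succ_le he)
      have he' : e + (q + A * (3 * d)) ≤ m + (q + A * (3 * d)) := by lia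
      obtain ⟨c', hc', hc's⟩ := hc.exists_transfer hA (h.symm.mono he') hrd hr'
        fun i => hnear _ (hc.localEFWin i)
      exact ⟨_, hc'.cons (singleton_refl a) fun i hac' =>
        ha (mem_gaifmanNbhd_of_distLE (hc's i) hac'.symm (by lia))⟩
  obtain ⟨c, hc⟩ := grow (m + 1) le_rfl
  have hcard := (encard_le_of_pairwise_not_distLE (fun i => hnear _ (hc.localEFWin i))
    hc.pairwise).trans hs
  rw [ENat.card_eq_coe_fintype_card, Fintype.card_fin] at hcard
  exact Nat.not_succ_le_self m (by exact_mod_cast hcard)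

theorem exists_insert (hA : ∀ n, L.Relations n → n ≤ A)
    (h : LocalEFWin L (m + 1 + (q + A * (3 * (2 * r + 1)))) (4 * (2 * r + 1)) s)
    (hs : s.encard ≤ m) (a : M) : ∃ b, LocalEFWin L q r (insert (a, b) s) := by
  by_cases ha : a ∈ gaifmanNbhd L (3 * (2 * r + 1)) s.dom
  · have hrank : q + A * (3 * (2 * r + 1)) + 1 ≤ m + 1 + (q + A * (3 * (2 * r + 1))) := by lia
    exact exists_insert_of_near hA (h.mono hrank) (by lia) (by lia) ha
  · have hfar : m + (q + A * (3 * (2 * r + 1))) ≤ m + 1 + (q + A * (3 * (2 * r + 1))) := by lia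
    obtain ⟨b, hb, hab⟩ := exists_far (r := r) hA (h.mono hfar) (encard_setRel_cod_le.trans hs)
      (by lia) (by lia) ha
    have hrank : q + A * r ≤ m + 1 + (q + A * (3 * (2 * r + 1))) := by
      have : A * r ≤ A * (3 * (2 * r + 1)) := by gcongr; lia
      lia
    have hsr : LocalEFWin L q r s := (h.mono hrank).localEFWin hA subset_rfl
      (gaifmanNbhd_mono_radius (by lia)) (gaifmanNbhd_mono_radius (by lia))
    exact ⟨b, hsr.insert_of_far hab (fun h' => ha (gaifmanNbhd_mono_radius (by lia) h')) hb⟩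

end LocalEFWin

theorem gaifman_locality (hA : ∀ n, L.Relations n → n ≤ A) (q m : ℕ) :
    ∃ r Q : ℕ, ∀ (M : Type w) [L.Structure M] (s : SetRel M M), s.encard ≤ m →
      LocalEFWin L Q r s → EFWin L q Set.univ Set.univ s := by
  induction q generalizing m with
  | zero => exact ⟨0, 0, fun M _ s _ h => h⟩
  | succ q ih =>
    obtain ⟨r, Q, hrQ⟩ := ih (m + 1)
    refine ⟨4 * (2 * r + 1), m + 1 + (Q + A * (3 * (2 * r + 1))), fun M _ s hs h => ?_⟩
    have hins : ∀ {s : SetRel M M} (p), s.encard ≤ m → (insert p s).encard ≤ (m + 1 : ℕ) :=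
      fun p hs => (Set.encard_insert_le _ p).trans (by push_cast; gcongr)
    have hinv : s.inv.encard ≤ m := by
      rwa [SetRel.inv, Set.encard_preimage_of_bijective Prod.swap_bijective]
    refine ⟨h.isPartialIso, fun a _ => ?_, fun b _ => ?_⟩
    · obtain ⟨b, hab⟩ := h.exists_insert hA hs a
      exact ⟨b, trivial, hrQ M _ (hins _ hs) hab⟩
    · obtain ⟨a, hba⟩ := h.symm.exists_insert hA hinv b
      refine ⟨a, trivial, (hrQ M _ (hins _ hinv) hba).symm.subset ?_⟩
      rintro p (rfl | hp)
      · exact Or.inl rfl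
      · exact Or.inr hp

end Locality

section Relativization

variable {L : FirstOrder.Language} {α β : Type*} {m n q r : ℕ} {M : Type w} [L.Structure M]

theorem qRank_imp (φ ψ : L.BoundedFormula α n) : qRank (φ.imp ψ) = max (qRank φ) (qRank ψ) := by
  simp only [qRank]

theorem qRank_all (φ : L.BoundedFormula α (n + 1)) : qRank φ.all = qRank φ + 1 := by
  simp only [qRank]

theorem qRank_bot : qRank (⊥ : L.BoundedFormula α n) = 0 :=
  qRank.eq_1 ..

theorem qRank_not (φ : L.BoundedFormula α n) : qRank φ.not = qRank φ := by
  rw [BoundedFormula.not, qRank_imp, qRank_bot, Nat.max_zero]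

theorem qRank_ex (φ : L.BoundedFormula α (n + 1)) : qRank φ.ex = qRank φ + 1 := by
  rw [BoundedFormula.ex, qRank_not, qRank_all, qRank_not]

theorem qRank_inf (φ ψ : L.BoundedFormula α n) : qRank (φ ⊓ ψ) = max (qRank φ) (qRank ψ) := by
  change qRank (φ.imp ψ.not).not = _
  rw [qRank_not, qRank_imp, qRank_not]

theorem qRank_sup (φ ψ : L.BoundedFormula α n) : qRank (φ ⊔ ψ) = max (qRank φ) (qRank ψ) := by
  change qRank (φ.not.imp ψ) = _
  rw [qRank_imp, qRank_not]

theorem qRank_castLE (h : m ≤ n) (φ : L.BoundedFormula α m) : qRank (φ.castLE h) = qRank φ := by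
  induction φ generalizing n with
  | falsum | equal | rel => simp only [BoundedFormula.castLE, qRank]
  | imp φ ψ ihφ ihψ => simp only [BoundedFormula.castLE, qRank, ihφ, ihψ]
  | all φ ih => simp only [BoundedFormula.castLE, qRank, ih]

theorem qRank_relabel (g : α → β ⊕ Fin m) (φ : L.BoundedFormula α n) :
    qRank (φ.relabel g) = qRank φ := by
  unfold BoundedFormula.relabel
  induction φ with
  | falsum | equal | rel => simp only [BoundedFormula.mapTermRel, qRank]
  | imp φ ψ ihφ ihψ => simp only [BoundedFormula.mapTermRel, qRank, ihφ, ihψ]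
  | all φ ih => simp only [BoundedFormula.mapTermRel, qRank, qRank_castLE, ih]

theorem qRank_foldr_sup_le (l : List (L.BoundedFormula α n)) (h : ∀ φ ∈ l, qRank φ ≤ q) :
    qRank (l.foldr (· ⊔ ·) ⊥) ≤ q := by
  induction l with
  | nil => exact qRank_bot.trans_le (Nat.zero_le q)
  | cons φ l ih =>
    rw [List.foldr_cons, qRank_sup]
    exact max_le (h φ List.mem_cons_self) (ih fun ψ hψ => h ψ (List.mem_cons_of_mem φ hψ))

theorem qRank_relativize_le (d : L.Formula (Fin 2)) (φ : L.BoundedFormula (Fin m) n) :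
    qRank (relativize d φ) ≤ qRank φ + qRank d := by
  induction φ with
  | falsum | equal | rel => simp only [relativize, qRank, Nat.zero_le]
  | imp φ ψ ihφ ihψ =>
    simp only [relativize, qRank]
    lia
  | all φ ih =>
    simp only [relativize, qRank]
    rw [Nat.add_right_comm (qRank φ)]
    refine Nat.succ_le_succ (max_le ((qRank_foldr_sup_le _ ?_).trans (Nat.le_add_left _ _)) ih)
    exact List.forall_mem_map.2 fun i _ => (qRank_relabel _ d).le

/-- The truth value of a formula whose quantifiers range over `X`; the free variables need not
take values in `X`. -/
def RealizeIn {M : Type*} [L.Structure M] (X : Set M) (v : α → M) :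
    ∀ {n : ℕ}, L.BoundedFormula α n → (Fin n → M) → Prop
  | _, .falsum, _ => False
  | _, .equal t₁ t₂, xs => t₁.realize (Sum.elim v xs) = t₂.realize (Sum.elim v xs)
  | _, .rel R ts, xs => Structure.RelMap R fun i => (ts i).realize (Sum.elim v xs)
  | _, .imp φ ψ, xs => RealizeIn X v φ xs → RealizeIn X v ψ xs
  | _, .all φ, xs => ∀ a ∈ X, RealizeIn X v φ (Fin.snoc xs a)

variable {X : Set M} {v : α → M} {xs : Fin n → M}

theorem realizeIn_univ {φ : L.BoundedFormula α n} :
    RealizeIn Set.univ v φ xs ↔ φ.Realize v xs := by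
  induction φ with
  | falsum | equal | rel => rfl
  | imp φ ψ ihφ ihψ => exact imp_congr ihφ ihψ
  | all φ ih => exact forall_congr' fun a => (imp_iff_right trivial).trans ih

theorem realizeIn_imp {φ ψ : L.BoundedFormula α n} :
    RealizeIn X v (φ.imp ψ) xs ↔ (RealizeIn X v φ xs → RealizeIn X v ψ xs) :=
  Iff.rfl

theorem realizeIn_not {φ : L.BoundedFormula α n} :
    RealizeIn X v φ.not xs ↔ ¬ RealizeIn X v φ xs :=
  Iff.rfl

theorem realizeIn_inf {φ ψ : L.BoundedFormula α n} :
    RealizeIn X v (φ ⊓ ψ) xs ↔ RealizeIn X v φ xs ∧ RealizeIn X v ψ xs :=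
  show ¬ (RealizeIn X v φ xs → ¬ RealizeIn X v ψ xs) ↔ _ from by rw [Classical.not_imp, not_not]

theorem realizeIn_ex {φ : L.BoundedFormula α (n + 1)} :
    RealizeIn X v φ.ex xs ↔ ∃ a ∈ X, RealizeIn X v φ (Fin.snoc xs a) := by
  change (¬ ∀ a ∈ X, ¬ RealizeIn X v φ (Fin.snoc xs a)) ↔ _
  push Not
  rfl

theorem realize_relativize {d : L.Formula (Fin 2)} (hd : IsDistFormula.{w} L r d) {u : Fin m → M}
    {φ : L.BoundedFormula (Fin m) n} :
    (relativize d φ).Realize u xs ↔ RealizeIn (nbhd L M r u) u φ xs := by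
  induction φ with
  | falsum | equal | rel => simp only [relativize]; rfl
  | imp φ ψ ihφ ihψ => simp only [relativize]; exact imp_congr ihφ ihψ
  | all φ ih =>
    simp only [relativize]
    refine forall_congr' fun a => imp_congr ?_ ih
    rw [BoundedFormula.realize_foldr_sup]
    simp only [List.mem_map, List.mem_finRange, true_and, exists_exists_eq_and]
    refine exists_congr fun i => (BoundedFormula.realize_relabel (n := 0)).trans ?_
    rw [← hd M, Formula.Realize]
    refine iff_of_eq (congrArg₂ _ ?_ (Subsingleton.elim _ _))
    ext j
    fin_cases j <;> simp

end Relativization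

section FraisseHintikka

/-- The position of the Ehrenfeucht–Fraïssé game in which the entries of two tuples have been
chosen. -/
def tupleRel {M N ι : Type*} (x : ι → M) (y : ι → N) : SetRel M N :=
  Set.range fun i => (x i, y i)

theorem mem_tupleRel {M N ι : Type*} (x : ι → M) (y : ι → N) (i : ι) :
    (x i, y i) ∈ tupleRel x y :=
  ⟨i, rfl⟩

theorem tupleRel_dom {M N ι : Type*} (x : ι → M) (y : ι → N) :
    (tupleRel x y).dom = Set.range x := by
  ext a
  simp [tupleRel, SetRel.mem_dom]

theorem tupleRel_cod {M N ι : Type*} (x : ι → M) (y : ι → N) :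
    (tupleRel x y).cod = Set.range y := by
  ext b
  simp [tupleRel, SetRel.mem_cod]

theorem encard_tupleRel_le {M N ι : Type*} (x : ι → M) (y : ι → N) :
    (tupleRel x y).encard ≤ ENat.card ι := by
  rw [tupleRel, ← Set.image_univ, ← Set.encard_univ]
  exact Set.encard_image_le _ _

variable {L : FirstOrder.Language} {α : Type*} {n q : ℕ} {M N : Type*} [L.Structure M]
  [L.Structure N] {X : Set M} {Y : Set N} {v : α → M} {v' : α → N} {xs : Fin n → M}
  {xs' : Fin n → N} {φ : L.BoundedFormula α n} {Φ Ψ : Set (L.BoundedFormula α n)}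

theorem tupleRel_snoc (a : M) (b : N) :
    tupleRel (Sum.elim v (Fin.snoc xs a : Fin (n + 1) → M))
        (Sum.elim v' (Fin.snoc xs' b : Fin (n + 1) → N)) =
      insert (a, b) (tupleRel (Sum.elim v xs) (Sum.elim v' xs')) := by
  ext p
  simp only [tupleRel, Set.mem_insert_iff, Set.mem_range, Sum.exists, Sum.elim_inl, Sum.elim_inr,
    Fin.exists_fin_succ', Fin.snoc_castSucc, Fin.snoc_last, eq_comm (a := p), or_assoc,
    or_comm (a := (a, b) = p)]

theorem tupleRel_sumElim_of_isEmpty {ι : Type*} [IsEmpty ι] (zs : ι → M) (zs' : ι → N) :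
    tupleRel (Sum.elim v zs) (Sum.elim v' zs') = tupleRel v v' := by
  ext p
  simp only [tupleRel, Set.mem_range, Sum.exists, Sum.elim_inl, IsEmpty.exists_iff, or_false]

theorem realize_mem_tupleRel [L.IsRelational] {β : Type*} (x : β → M) (y : β → N) (t : L.Term β) :
    (t.realize x, t.realize y) ∈ tupleRel x y := by
  cases t with
  | var i => exact mem_tupleRel x y i
  | func f => exact isEmptyElim f

theorem EFWin.realizeIn_iff [L.IsRelational]
    (h : EFWin L q X Y (tupleRel (Sum.elim v xs) (Sum.elim v' xs'))) (hφ : qRank φ ≤ q) :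
    RealizeIn X v φ xs ↔ RealizeIn Y v' φ xs' := by
  induction φ generalizing q with
  | falsum => rfl
  | equal t₁ t₂ =>
    exact h.isPartialIso.eq_iff (realize_mem_tupleRel _ _ t₁) (realize_mem_tupleRel _ _ t₂)
  | rel R ts => exact h.isPartialIso.relMap_iff R fun i => realize_mem_tupleRel _ _ (ts i)
  | imp φ ψ ihφ ihψ =>
    rw [qRank_imp, max_le_iff] at hφ
    exact imp_congr (ihφ h hφ.1) (ihψ h hφ.2)
  | all φ ih =>
    rw [qRank_all] at hφ
    obtain ⟨q, rfl⟩ := Nat.exists_eq_add_of_le' (Nat.one_le_of_lt hφ)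
    have step : ∀ a b, EFWin L q X Y (insert (a, b) (tupleRel (Sum.elim v xs) (Sum.elim v' xs'))) →
        (RealizeIn X v φ (Fin.snoc xs a) ↔ RealizeIn Y v' φ (Fin.snoc xs' b)) := fun a b hab =>
      ih (tupleRel_snoc a b ▸ hab) (Nat.le_of_succ_le_succ hφ)
    constructor
    · intro hX b hb
      obtain ⟨a, ha, hab⟩ := h.2.2 b hb
      exact (step a b hab).1 (hX a ha)
    · intro hY a ha
      obtain ⟨b, hb, hab⟩ := h.2.1 a ha
      exact (step a b hab).2 (hY b hb)

/-- The part of `Φ` that holds at a tuple when quantifiers range over `X`. For suitable finite `Φ`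
it determines the rank-`q` type of the tuple. -/
def typeIn {M : Type*} [L.Structure M] (Φ : Set (L.BoundedFormula α n)) (X : Set M) (v : α → M)
    (xs : Fin n → M) : Set (L.BoundedFormula α n) :=
  {φ ∈ Φ | RealizeIn X v φ xs}

theorem realizeIn_iff_of_typeIn_eq (h : typeIn Φ X v xs = typeIn Φ Y v' xs') (hφ : φ ∈ Φ) :
    RealizeIn X v φ xs ↔ RealizeIn Y v' φ xs' :=
  ⟨fun hX => (h.subset ⟨hφ, hX⟩).2, fun hY => (h.superset ⟨hφ, hY⟩).2⟩

theorem typeIn_eq_of_subset (h : typeIn Φ X v xs = typeIn Φ Y v' xs') (hΨ : Ψ ⊆ Φ) :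
    typeIn Ψ X v xs = typeIn Ψ Y v' xs' :=
  Set.ext fun _ => and_congr_right fun hψ => realizeIn_iff_of_typeIn_eq h (hΨ hψ)

theorem typeIn_insert_of_realizeIn (h : RealizeIn X v φ xs) :
    typeIn (insert φ Φ) X v xs = insert φ (typeIn Φ X v xs) := by
  ext ψ
  simp only [typeIn, Set.mem_ofPred_eq, Set.mem_insert_iff]
  grind

theorem typeIn_insert_of_not_realizeIn (h : ¬ RealizeIn X v φ xs) :
    typeIn (insert φ Φ) X v xs = typeIn Φ X v xs := by
  ext ψ
  simp only [typeIn, Set.mem_ofPred_eq, Set.mem_insert_iff]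
  grind

theorem exists_realizeIn_iff_typeIn_mem (hΦ : Φ.Finite)
    (hq : ∀ φ ∈ Φ, qRank φ ≤ q) (𝒮 : Set (Set (L.BoundedFormula α n))) :
    ∃ θ : L.BoundedFormula α n, qRank θ ≤ q ∧ ∀ (M : Type w) [L.Structure M] (X : Set M)
      (v : α → M) (xs : Fin n → M), RealizeIn X v θ xs ↔ typeIn Φ X v xs ∈ 𝒮 := by
  induction Φ, hΦ using Set.Finite.induction_on generalizing 𝒮 with
  | empty =>
    by_cases h𝒮 : ∅ ∈ 𝒮
    · exact ⟨BoundedFormula.not ⊥, by rw [qRank_not, qRank_bot]; exact Nat.zero_le q,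
        fun M _ X v xs => by simpa [typeIn, RealizeIn] using h𝒮⟩
    · exact ⟨⊥, qRank_bot.trans_le (Nat.zero_le q),
        fun M _ X v xs => by simpa [typeIn, RealizeIn] using h𝒮⟩
  | @insert φ Φ _ _ ih =>
    obtain ⟨hφ, hΦ⟩ := Set.forall_mem_insert.1 hq
    obtain ⟨θ₁, hθ₁, h₁⟩ := ih hΦ {S | insert φ S ∈ 𝒮}
    obtain ⟨θ₀, hθ₀, h₀⟩ := ih hΦ 𝒮
    refine ⟨φ.imp θ₁ ⊓ φ.not.imp θ₀, ?_, fun M _ X v xs => ?_⟩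
    · rw [qRank_inf, qRank_imp, qRank_imp, qRank_not]
      exact max_le (max_le hφ hθ₁) (max_le hφ hθ₀)
    · rw [realizeIn_inf, realizeIn_imp, realizeIn_imp, realizeIn_not, h₁, h₀]
      by_cases hX : RealizeIn X v φ xs
      · rw [typeIn_insert_of_realizeIn hX]
        simp only [hX, true_imp_iff, not_true, false_imp_iff, and_true, Set.mem_ofPred_eq]
      · rw [typeIn_insert_of_not_realizeIn hX]
        simp only [hX, false_imp_iff, not_false_iff, true_imp_iff, true_and]

/-- The equalities and relational atoms whose arguments are variables. -/
def atomicFormulas (L : FirstOrder.Language) (α : Type*) (n : ℕ) : Set (L.BoundedFormula α n) :=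
  (Set.range fun p : (α ⊕ Fin n) × (α ⊕ Fin n) => .equal (.var p.1) (.var p.2)) ∪
    Set.range fun p : Σ R : Σ m, L.Relations m, Fin R.1 → α ⊕ Fin n =>
      .rel p.1.2 fun i => .var (p.2 i)

theorem finite_sigma_relations (L : FirstOrder.Language) [Finite L.Symbols] :
    Finite (Σ m, L.Relations m) :=
  Finite.of_injective _ (Sum.inr_injective (α := Σ m, L.Functions m))

theorem finite_atomicFormulas [Finite L.Symbols] [Finite α] : (atomicFormulas L α n).Finite :=
  have := finite_sigma_relations L
  (Set.finite_range _).union (Set.finite_range _)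

theorem qRank_eq_zero_of_mem_atomicFormulas (h : φ ∈ atomicFormulas L α n) : qRank φ = 0 := by
  rcases h with ⟨p, rfl⟩ | ⟨p, rfl⟩ <;> simp only [qRank]

theorem isPartialIso_of_typeIn_eq
    (h : typeIn (atomicFormulas L α n) X v xs = typeIn (atomicFormulas L α n) Y v' xs') :
    IsPartialIso L (tupleRel (Sum.elim v xs) (Sum.elim v' xs')) where
  eq_iff := by
    rintro _ _ _ _ ⟨i, hi⟩ ⟨j, hj⟩
    obtain ⟨rfl, rfl⟩ := Prod.mk.inj hi
    obtain ⟨rfl, rfl⟩ := Prod.mk.inj hj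
    exact realizeIn_iff_of_typeIn_eq h (Or.inl ⟨(i, j), rfl⟩)
  relMap_iff R x y hxy := by
    choose i hi using hxy
    obtain rfl : Sum.elim v xs ∘ i = x := funext fun l => congrArg Prod.fst (hi l)
    obtain rfl : Sum.elim v' xs' ∘ i = y := funext fun l => congrArg Prod.snd (hi l)
    exact realizeIn_iff_of_typeIn_eq h (Or.inr ⟨⟨⟨_, R⟩, i⟩, rfl⟩)

/-- A move of the game is described by the formulas `∃ y χ_S`, where `χ_S` says that the extended
tuple has the type `S`. -/
theorem exists_typeIn_snoc_eq {M N : Type w} [L.Structure M] [L.Structure N] {X : Set M} {Y : Set N}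
    {v : α → M} {v' : α → N} {xs : Fin n → M} {xs' : Fin n → N}
    {Φ : Set (L.BoundedFormula α (n + 1))}
    {χ : Set (L.BoundedFormula α (n + 1)) → L.BoundedFormula α (n + 1)}
    (hχ : ∀ (S) (M : Type w) [L.Structure M] (X : Set M) (v : α → M) (xs : Fin (n + 1) → M),
      RealizeIn X v (χ S) xs ↔ typeIn Φ X v xs = S)
    (hΨ : ∀ S ⊆ Φ, (χ S).ex ∈ Ψ) (h : typeIn Ψ X v xs = typeIn Ψ Y v' xs') {a : M} (ha : a ∈ X) :
    ∃ b ∈ Y, typeIn Φ X v (Fin.snoc xs a) = typeIn Φ Y v' (Fin.snoc xs' b) := by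
  have hX := realizeIn_ex (xs := xs).2 ⟨a, ha, (hχ _ M X v _).2 rfl⟩
  have hY := (realizeIn_iff_of_typeIn_eq h (hΨ _ (Set.sep_subset _ _))).1 hX
  obtain ⟨b, hb, hab⟩ := realizeIn_ex.1 hY
  exact ⟨b, hb, ((hχ _ N Y v' _).1 hab).symm⟩

theorem exists_finite_efWin_of_typeIn_eq (L : FirstOrder.Language) [Finite L.Symbols] (α : Type*)
    [Finite α] (q n : ℕ) :
    ∃ Φ : Set (L.BoundedFormula α n), Φ.Finite ∧ (∀ φ ∈ Φ, qRank φ ≤ q) ∧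
      ∀ (M N : Type w) [L.Structure M] [L.Structure N] (X : Set M) (Y : Set N) (v : α → M)
        (v' : α → N) (xs : Fin n → M) (xs' : Fin n → N),
        typeIn Φ X v xs = typeIn Φ Y v' xs' →
          EFWin L q X Y (tupleRel (Sum.elim v xs) (Sum.elim v' xs')) := by
  induction q generalizing n with
  | zero =>
    exact ⟨atomicFormulas L α n, finite_atomicFormulas,
      fun φ hφ => (qRank_eq_zero_of_mem_atomicFormulas hφ).le,
      fun M N _ _ X Y v v' xs xs' => isPartialIso_of_typeIn_eq⟩
  | succ q ih =>
    obtain ⟨Φ, hΦ, hrank, hwin⟩ := ih (n + 1)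
    choose χ hχ hχ_iff using fun S => exists_realizeIn_iff_typeIn_mem.{w} hΦ hrank {S}
    have hmem : ∀ S ⊆ Φ, (χ S).ex ∈ atomicFormulas L α n ∪ (fun S => (χ S).ex) '' 𝒫 Φ :=
      fun S hS => Or.inr ⟨S, hS, rfl⟩
    refine ⟨atomicFormulas L α n ∪ (fun S => (χ S).ex) '' 𝒫 Φ,
      finite_atomicFormulas.union (hΦ.powerset.image _), ?_,
      fun M N _ _ X Y v v' xs xs' h => ⟨?_, fun a ha => ?_, fun b hb => ?_⟩⟩
    · rintro φ (hφ | ⟨S, -, rfl⟩)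
      · exact (qRank_eq_zero_of_mem_atomicFormulas hφ).trans_le (Nat.zero_le _)
      · exact (qRank_ex _).trans_le (Nat.succ_le_succ (hχ S))
    · exact isPartialIso_of_typeIn_eq (typeIn_eq_of_subset h Set.subset_union_left)
    · obtain ⟨b, hb, hab⟩ := exists_typeIn_snoc_eq hχ_iff hmem h ha
      exact ⟨b, hb, tupleRel_snoc a b ▸ hwin M N X Y v v' _ _ hab⟩
    · obtain ⟨a, ha, hab⟩ := exists_typeIn_snoc_eq hχ_iff hmem h.symm hb
      exact ⟨a, ha, tupleRel_snoc a b ▸ hwin M N X Y v v' _ _ hab.symm⟩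

theorem exists_finite_realizeIn_iff_of_qRank_le (L : FirstOrder.Language) [L.IsRelational]
    [Finite L.Symbols] (α : Type*) [Finite α] (q n : ℕ) :
    ∃ Ψ : Set (L.BoundedFormula α n), Ψ.Finite ∧ ∀ φ : L.BoundedFormula α n, qRank φ ≤ q →
      ∃ ψ ∈ Ψ, ∀ (M : Type w) [L.Structure M] (X : Set M) (v : α → M) (xs : Fin n → M),
        RealizeIn X v φ xs ↔ RealizeIn X v ψ xs := by
  obtain ⟨Φ, hΦ, hrank, hwin⟩ := exists_finite_efWin_of_typeIn_eq.{w} L α q n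
  choose θ _ hθ using fun 𝒮 => exists_realizeIn_iff_typeIn_mem.{w} hΦ hrank 𝒮
  refine ⟨θ '' 𝒫 𝒫 Φ, hΦ.powerset.powerset.image θ, fun φ hφ => ?_⟩
  let 𝒮 : Set (Set (L.BoundedFormula α n)) :=
    {S | ∃ (M : Type w) (_ : L.Structure M) (X : Set M) (v : α → M) (xs : Fin n → M),
      RealizeIn X v φ xs ∧ typeIn Φ X v xs = S}
  have h𝒮 : 𝒮 ⊆ 𝒫 Φ := by
    rintro _ ⟨M, _, X, v, xs, -, rfl⟩
    exact Set.sep_subset _ _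
  refine ⟨θ 𝒮, ⟨𝒮, h𝒮, rfl⟩, fun M _ X v xs => ⟨fun h => ?_, fun h => ?_⟩⟩
  · exact (hθ 𝒮 M X v xs).2 ⟨M, _, X, v, xs, h, rfl⟩
  · obtain ⟨N, _, Y, v', xs', hφN, htype⟩ := (hθ 𝒮 M X v xs).1 h
    exact ((hwin N M Y X v' v xs' xs htype).realizeIn_iff hφ).1 hφN

theorem exists_arity_bound (L : FirstOrder.Language) [Finite L.Symbols] :
    ∃ A, ∀ n, L.Relations n → n ≤ A := by
  have := finite_sigma_relations L
  obtain ⟨A, hA⟩ := (Set.finite_range fun R : Σ n, L.Relations n => R.1).bddAbove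
  exact ⟨A, fun n R => hA ⟨⟨n, R⟩, rfl⟩⟩

/-- The local formula may depend on `M`: the types realised in `M` decide which Boolean combination
of local formulas is equivalent to `φ`, so that no basic local sentences are needed. -/
theorem exists_synLocal_realize_iff [L.IsRelational] [Finite L.Symbols] (m q : ℕ)
    (dlt : ℕ → L.Formula (Fin 2)) (hdlt : ∀ r, IsDistFormula.{w} L r (dlt r)) :
    ∃ Q r : ℕ, ∀ (M : Type w) [L.Structure M] (φ : L.Formula (Fin m)), qRank φ ≤ q →
      ∃ ψ : L.Formula (Fin m), SynLocal (dlt r) ψ ∧ qRank ψ ≤ Q ∧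
        ∀ u : Fin m → M, ψ.Realize u ↔ φ.Realize u := by
  obtain ⟨A, hA⟩ := exists_arity_bound L
  obtain ⟨r, Q, hloc⟩ := gaifman_locality.{w} hA q m
  obtain ⟨Φ, hΦ, hrank, hwin⟩ := exists_finite_efWin_of_typeIn_eq.{w} L (Fin m) Q 0
  refine ⟨Q + qRank (dlt r), r, fun M _ φ hφ => ?_⟩
  obtain ⟨θ, hθ, hθ_iff⟩ := exists_realizeIn_iff_typeIn_mem.{w} hΦ hrank
    {S | ∃ u : Fin m → M, φ.Realize u ∧ typeIn Φ (nbhd L M r u) u default = S}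
  refine ⟨relativize (dlt r) θ, ⟨θ, rfl⟩,
    (qRank_relativize_le _ θ).trans (Nat.add_le_add_right hθ _), fun u => ?_⟩
  rw [Formula.Realize, realize_relativize (hdlt r), hθ_iff]
  refine ⟨fun ⟨u', hu', htype⟩ => ?_, fun hu => ⟨u, hu, rfl⟩⟩
  have hlocal : LocalEFWin L Q r (tupleRel u' u) := by
    have h := hwin M M _ _ u' u _ _ htype
    rwa [tupleRel_sumElim_of_isEmpty, ← gaifmanNbhd_range, ← gaifmanNbhd_range,
      ← tupleRel_dom u' u, ← tupleRel_cod u' u] at h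
  have hcard : (tupleRel u' u).encard ≤ m := (encard_tupleRel_le u' u).trans (by simp)
  have hglobal := hloc M _ hcard hlocal
  rw [← tupleRel_sumElim_of_isEmpty (default : Fin 0 → M) default] at hglobal
  exact realizeIn_univ.1 ((hglobal.realizeIn_iff hφ).1 (realizeIn_univ.2 hu'))

end FraisseHintikka

section Learning

open MeasureTheory
open scoped ENNReal

variable {Ω κ ι : Type*} [MeasurableSpace Ω] [Fintype κ] [Fintype ι] (D : Measure Ω)
  [IsProbabilityMeasure D]

theorem pi_forall_notMem_le {E : Set Ω} (hE : MeasurableSet E) {ε : ℝ≥0∞} (h : ε ≤ D E) :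
    Measure.pi (fun _ : κ => D) {x | ∀ i, x i ∉ E} ≤ (1 - ε) ^ Fintype.card κ := by
  have hpi : {x : κ → Ω | ∀ i, x i ∉ E} = Set.univ.pi fun _ => Eᶜ := by
    ext x
    simp only [Set.mem_ofPred_eq, Set.mem_univ_pi, Set.mem_compl_iff]
  rw [hpi, Measure.pi_pi, Finset.prod_const, Finset.card_univ, prob_compl_eq_one_sub hE]
  gcongr

theorem one_sub_card_mul_pow_le_pi {E : ι → Set Ω} (hE : ∀ j, MeasurableSet (E j)) (ε : ℝ≥0∞) :
    1 - Fintype.card ι * (1 - ε) ^ Fintype.card κ ≤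
      Measure.pi (fun _ : κ => D) {x | ∀ j, (∀ i, x i ∉ E j) → D (E j) < ε} := by
  set μ := Measure.pi fun _ : κ => D
  set G := {x : κ → Ω | ∀ j, (∀ i, x i ∉ E j) → D (E j) < ε} with hG
  let F : ι → Set (κ → Ω) := fun j => {x | (∀ i, x i ∉ E j) ∧ ε ≤ D (E j)}
  have hcover : Gᶜ ⊆ ⋃ j, F j := by
    intro x hx
    simp only [hG, Set.mem_compl_iff, Set.mem_ofPred_eq] at hx
    push Not at hx
    exact Set.mem_iUnion.2 hx
  have hF : ∀ j, μ (F j) ≤ (1 - ε) ^ Fintype.card κ := by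
    intro j
    by_cases hj : ε ≤ D (E j)
    · exact (measure_mono fun x hx => hx.1).trans (pi_forall_notMem_le D (hE j) hj)
    · have hempty : F j = ∅ := Set.eq_empty_of_forall_notMem fun x hx => hj hx.2
      exact hempty ▸ measure_empty.trans_le zero_le
  have hbad : μ Gᶜ ≤ Fintype.card ι * (1 - ε) ^ Fintype.card κ :=
    calc μ Gᶜ ≤ ∑ j, μ (F j) := (measure_mono hcover).trans (measure_iUnion_fintype_le _ _)
      _ ≤ ∑ _j : ι, (1 - ε) ^ Fintype.card κ := Finset.sum_le_sum fun j _ => hF j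
      _ = Fintype.card ι * (1 - ε) ^ Fintype.card κ := by
        rw [Finset.sum_const, Finset.card_univ, nsmul_eq_mul]
  rw [tsub_le_iff_right]
  calc 1 = μ Set.univ := measure_univ.symm
    _ ≤ μ G + μ Gᶜ := measure_univ_le_add_compl G
    _ ≤ _ := by gcongr

theorem one_sub_pow_le_inv_pow {ε a : ℝ} (hε : 0 < ε) (hε' : ε ≤ 1) (ha : 0 < a) {s t : ℕ}
    (h : s * ⌈Real.log a / ε⌉₊ ≤ t) : (1 - ε) ^ t ≤ a⁻¹ ^ s := by
  have hlog : s * Real.log a ≤ t * ε := by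
    rw [← div_le_iff₀ hε, mul_div_assoc]
    calc s * (Real.log a / ε) ≤ s * ⌈Real.log a / ε⌉₊ := by gcongr; exact Nat.le_ceil _
      _ ≤ t := by exact_mod_cast h
  calc (1 - ε) ^ t ≤ Real.exp (-ε) ^ t := by
        have : 0 ≤ 1 - ε := sub_nonneg.2 hε'
        gcongr
        exact Real.one_sub_le_exp_neg ε
    _ = Real.exp (-(t * ε)) := by rw [← Real.exp_nat_mul, mul_neg]
    _ ≤ Real.exp (-(s * Real.log a)) := by gcongr
    _ = a⁻¹ ^ s := by rw [← mul_neg, ← Real.log_inv, Real.exp_nat_mul, Real.exp_log (inv_pos.2 ha)]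

/-- The factor `F` is absorbed by the exponent: `F ≤ n ^ F`. -/
theorem mul_pow_mul_one_sub_pow_le {F n ℓ t : ℕ} (hn : 2 ≤ n) {ε δ : ℝ} (hε : 0 < ε) (hε' : ε ≤ 1)
    (hδ : 0 < δ) (hδ' : δ ≤ 1) (ht : (F + ℓ + 1) * ⌈Real.log (n / δ) / ε⌉₊ ≤ t) :
    F * (n : ℝ) ^ ℓ * (1 - ε) ^ t ≤ δ := by
  have hn0 : (0 : ℝ) < n := by exact_mod_cast zero_lt_two.trans_le hn
  have hF : (F : ℝ) ≤ (n : ℝ) ^ F := by exact_mod_cast (Nat.lt_pow_self hn).le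
  have hn1 : (1 : ℝ) ≤ n := by exact_mod_cast one_le_two.trans hn
  calc F * (n : ℝ) ^ ℓ * (1 - ε) ^ t ≤ F * (n : ℝ) ^ ℓ * (n / δ)⁻¹ ^ (F + ℓ + 1) := by
        gcongr
        exact one_sub_pow_le_inv_pow hε hε' (by positivity) ht
    _ ≤ (n : ℝ) ^ F * (n : ℝ) ^ ℓ * (n / δ)⁻¹ ^ (F + ℓ + 1) := by gcongr
    _ ≤ (n : ℝ) ^ (F + ℓ + 1) * (n / δ)⁻¹ ^ (F + ℓ + 1) := by
        rw [← pow_add]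
        exact mul_le_mul_of_nonneg_right (pow_le_pow_right₀ hn1 (Nat.le_succ _)) (by positivity)
    _ = δ ^ (F + ℓ + 1) := by rw [← mul_pow, inv_div, mul_div_cancel₀ _ hn0.ne']
    _ ≤ δ := pow_le_of_le_one hδ.le hδ' (Nat.succ_ne_zero _)

theorem ofReal_one_sub_le_pi_of_card_le {F n ℓ t : ℕ} (hn : 2 ≤ n)
    (hcard : Fintype.card ι ≤ F * n ^ ℓ) {E : ι → Set Ω} (hE : ∀ j, MeasurableSet (E j)) {ε δ : ℝ}
    (hε : 0 < ε) (hε' : ε ≤ 1) (hδ : 0 < δ) (hδ' : δ ≤ 1)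
    (ht : (F + ℓ + 1) * ⌈Real.log (n / δ) / ε⌉₊ ≤ t) :
    ENNReal.ofReal (1 - δ) ≤ Measure.pi (fun _ : Fin t => D)
      {x | ∀ j, (∀ i, x i ∉ E j) → D (E j) < ENNReal.ofReal ε} := by
  have hfail : Fintype.card ι * (1 - ε) ^ t ≤ δ := by
    refine le_trans ?_ (mul_pow_mul_one_sub_pow_le hn hε hε' hδ hδ' ht)
    have : 0 ≤ 1 - ε := sub_nonneg.2 hε'
    gcongr
    exact_mod_cast hcard
  have hfail' : Fintype.card ι * (1 - ENNReal.ofReal ε) ^ t ≤ ENNReal.ofReal δ := by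
    have hle := ENNReal.ofReal_le_ofReal hfail
    rwa [ENNReal.ofReal_mul (Nat.cast_nonneg _), ENNReal.ofReal_natCast,
      ENNReal.ofReal_pow (sub_nonneg.2 hε'), ENNReal.ofReal_sub _ hε.le, ENNReal.ofReal_one] at hle
  have hunion := one_sub_card_mul_pow_le_pi (κ := Fin t) D hE (ENNReal.ofReal ε)
  rw [Fintype.card_fin] at hunion
  rw [ENNReal.ofReal_sub _ hδ.le, ENNReal.ofReal_one]
  exact (tsub_le_tsub_left hfail' 1).trans hunion

theorem exists_sample_size (L : FirstOrder.Language) [L.IsRelational] [Finite L.Symbols]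
    (k ℓ q : ℕ) :
    ∃ s : ℕ, ∀ (B : Type w) [L.Structure B] [Fintype B] [MeasurableSpace (Fin k → B)]
      [MeasurableSingletonClass (Fin k → B)], 2 ≤ Fintype.card B →
      ∀ (D : Measure (Fin k → B)) [IsProbabilityMeasure D] (C : (Fin k → B) → Prop) (ε δ : ℝ),
      ε ∈ Set.Ioo (0 : ℝ) 1 → δ ∈ Set.Ioo (0 : ℝ) 1 →
      ∀ t : ℕ, s * ⌈Real.log (Fintype.card B / δ) / ε⌉₊ ≤ t →
      ENNReal.ofReal (1 - δ) ≤ Measure.pi (fun _ : Fin t => D)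
        {x | ∀ φ : L.Formula (Fin (k + ℓ)), qRank φ ≤ q → ∀ v : Fin ℓ → B,
          (∀ i, φ.Realize (Fin.append (x i) v) ↔ C (x i)) →
            D {u | ¬(φ.Realize (Fin.append u v) ↔ C u)} < ENNReal.ofReal ε} := by
  obtain ⟨Ψ, hΨ, hφΨ⟩ := exists_finite_realizeIn_iff_of_qRank_le.{w} L (Fin (k + ℓ)) q 0
  have := hΨ.fintype
  refine ⟨Fintype.card Ψ + ℓ + 1, fun B _ _ _ _ hB D _ C ε δ hε hδ t ht => ?_⟩
  classical
  let E : Ψ × (Fin ℓ → B) → Set (Fin k → B) := fun p =>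
    {u | ¬(p.1.1.Realize (Fin.append u p.2) default ↔ C u)}
  have hcard : Fintype.card (Ψ × (Fin ℓ → B)) ≤ Fintype.card Ψ * Fintype.card B ^ ℓ := by simp
  refine (ofReal_one_sub_le_pi_of_card_le D hB hcard (E := E)
    (fun p => (Set.toFinite _).measurableSet) hε.1 hε.2.le hδ.1 hδ.2.le ht).trans
    (measure_mono fun x hx φ hφ v hv => ?_)
  obtain ⟨ψ, hψ, hφψ⟩ := hφΨ φ hφ
  have hiff : ∀ u : Fin k → B,
      φ.Realize (Fin.append u v) ↔ ψ.Realize (Fin.append u v) default := fun u =>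
    realizeIn_univ.symm.trans ((hφψ B _ _ _).trans realizeIn_univ)
  simp only [hiff] at hv ⊢
  exact hx (⟨ψ, hψ⟩, v) fun i => not_not.2 (hv i)

end Learning

open MeasureTheory in
theorem statement_15_general {L : FirstOrder.Language} [L.IsRelational] [Finite L.Symbols]
    (k ℓ q : ℕ) (dlt : ℕ → L.Formula (Fin 2)) (hdlt : ∀ r, IsDistFormula.{w} L r (dlt r)) :
    ∃ qs rs ss : ℕ, ∀ (B : Type w) [L.Structure B] [Fintype B]
      [MeasurableSpace (Fin k → B)] [MeasurableSingletonClass (Fin k → B)],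
      2 ≤ Fintype.card B →
      ∀ D : Measure (Fin k → B), IsProbabilityMeasure D →
      ∀ φ₀ : L.Formula (Fin (k + ℓ)), qRank φ₀ ≤ q → ∀ v₀ : Fin ℓ → B,
      ∀ ε δ : ℝ, ε ∈ Set.Ioo (0 : ℝ) 1 → δ ∈ Set.Ioo (0 : ℝ) 1 →
      ∀ t : ℕ, ss * ⌈Real.log ((Fintype.card B : ℝ) / δ) / ε⌉₊ ≤ t →
      ENNReal.ofReal (1 - δ) ≤
        Measure.pi (fun _ : Fin t => D)
          {x : Fin t → Fin k → B |
            (∃ φs : L.Formula (Fin (k + ℓ)), SynLocal (dlt rs) φs ∧ qRank φs ≤ qs ∧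
              ∃ vs : Fin ℓ → B, ∀ u : Fin k → B,
                (φs.Realize (Fin.append u vs) ↔ φ₀.Realize (Fin.append u v₀))) ∧
            ∀ φs : L.Formula (Fin (k + ℓ)), qRank φs ≤ qs → ∀ vs : Fin ℓ → B,
              (∀ i, (φs.Realize (Fin.append (x i) vs) ↔ φ₀.Realize (Fin.append (x i) v₀))) →
              D {u | ¬(φs.Realize (Fin.append u vs) ↔ φ₀.Realize (Fin.append u v₀))} <
                ENNReal.ofReal ε} := by
  obtain ⟨qs, rs, hlocal⟩ := exists_synLocal_realize_iff (k + ℓ) q dlt hdlt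
  obtain ⟨ss, hsample⟩ := exists_sample_size.{w} L k ℓ qs
  refine ⟨qs, rs, ss, fun B _ _ _ _ hB D _ φ₀ hφ₀ v₀ ε δ hε hδ t ht => ?_⟩
  obtain ⟨φs, hφs, hqs, hiff⟩ := hlocal B φ₀ hφ₀
  exact (hsample B hB D (fun u => φ₀.Realize (Fin.append u v₀)) ε δ hε hδ t ht).trans
    (measure_mono fun x hx => ⟨⟨φs, hφs, hqs, v₀, fun u => hiff _⟩, hx⟩)

open MeasureTheory in
/-- Theorem 5.2: PAC learning of first-order definable concepts over a finite
background structure.  With probability at least `1 - δ` over `t ≥ s*⌈log(n/δ)/ε⌉` training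
instances drawn i.i.d. from `D` and labelled by the target concept `⟦φ₀(x̄; v₀)⟧^B`
(of quantifier rank at most `q`): (i) some syntactically `r*`-local hypothesis of quantifier
rank at most `q*` is consistent with the sample, and (ii) every such consistent hypothesis has
generalisation error less than `ε`.  Here `dlt r` is the formula `δ_{≤r}`. -/
theorem statement_15 {L : FirstOrder.Language} [L.IsRelational] [Finite L.Symbols]
    (k ℓ q : ℕ) (dlt : ℕ → L.Formula (Fin 2)) (hdlt : ∀ r, IsDistFormula.{w} L r (dlt r)) :
    ∃ qs rs ss : ℕ, ∀ (B : Type w) [L.Structure B] [Fintype B]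
      [MeasurableSpace (Fin k → B)] [MeasurableSingletonClass (Fin k → B)],
      2 ≤ Fintype.card B →
      ∀ D : Measure (Fin k → B), IsProbabilityMeasure D →
      ∀ φ₀ : L.Formula (Fin (k + ℓ)), qRank φ₀ ≤ q → ∀ v₀ : Fin ℓ → B,
      ∀ ε δ : ℝ, ε ∈ Set.Ioo (0 : ℝ) 1 → δ ∈ Set.Ioo (0 : ℝ) 1 →
      ∀ t : ℕ, ss * ⌈Real.log ((Fintype.card B : ℝ) / δ) / ε⌉₊ ≤ t →
      ENNReal.ofReal (1 - δ) ≤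
        Measure.pi (fun _ : Fin t => D)
          {x : Fin t → Fin k → B |
            (∃ φs : L.Formula (Fin (k + ℓ)), SynLocal (dlt rs) φs ∧ qRank φs ≤ qs ∧
              ∃ vs : Fin ℓ → B, ∀ i,
                (φs.Realize (Fin.append (x i) vs) ↔ φ₀.Realize (Fin.append (x i) v₀))) ∧
            ∀ φs : L.Formula (Fin (k + ℓ)), SynLocal (dlt rs) φs → qRank φs ≤ qs →
              ∀ vs : Fin ℓ → B,
                (∀ i, (φs.Realize (Fin.append (x i) vs) ↔ φ₀.Realize (Fin.append (x i) v₀))) →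
                D {u | ¬(φs.Realize (Fin.append u vs) ↔ φ₀.Realize (Fin.append u v₀))} <
                  ENNReal.ofReal ε} := by
  obtain ⟨qs, rs, ss, h⟩ := statement_15_general k ℓ q dlt hdlt
  exact ⟨qs, rs, ss, fun B _ _ _ _ hB D hD φ₀ hφ₀ v₀ ε δ hε hδ t ht =>
    (h B hB D hD φ₀ hφ₀ v₀ ε δ hε hδ t ht).trans (measure_mono fun x ⟨⟨φs, hφs, hqs, vs, hv⟩, hx⟩ =>
      ⟨⟨φs, hφs, hqs, vs, fun i => hv (x i)⟩, fun φs _ => hx φs⟩)⟩
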